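/- arXiv:math/0006207 — 2 statements merged into one kernel-verified Lean document; each statement's English description precedes it below -/
import Mathlib

section
/- For all integers L, i, j with i ≥ 0, j ≥ 0 and L ≥ i+j, the identity \sum_{k=0}^{\min(i,j)} q^{T_{i+j-k} + T_k} [L-i-j+k; k] [L-j; i-k] [L-i; j-k] = q^{T_i + T_j} \binom{L}{i, j, L-i-j}_q holds as an identity of polynomials in q, where [m; r] denotes the Gaussian binomial coefficient and \binom{L}{i, j, L-i-j}_q = (q)_L / ((q)_i (q)_j (q)_{L-i-j}) is the q-multinomial coefficient of order 3. -/
open Finset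

/-- `(q)_n = (q;q)_n = ∏_{t=0}^{n-1} (1 - q^{t+1})` in `ℚ(q)`. -/
noncomputable def qPoch (n : ℕ) : RatFunc ℚ :=
  ∏ t ∈ Finset.range n, (1 - (RatFunc.X : RatFunc ℚ) ^ (t + 1))

/-- The Gaussian (q-)binomial coefficient `[m; r] = (q)_m / ((q)_r (q)_{m-r})` for
`0 ≤ r ≤ m`, and `0` otherwise. -/
noncomputable def qbin (m r : ℤ) : RatFunc ℚ :=
  if 0 ≤ r ∧ r ≤ m then qPoch m.toNat / (qPoch r.toNat * qPoch (m - r).toNat) else 0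

/-- The q-multinomial coefficient of order 3,
`[u+v+w; u, v, w] = (q)_{u+v+w} / ((q)_u (q)_v (q)_w)`, set to `0` if any of
`u, v, w` is negative. -/
noncomputable def qtrinom (u v w : ℤ) : RatFunc ℚ :=
  if 0 ≤ u ∧ 0 ≤ v ∧ 0 ≤ w then
    qPoch (u + v + w).toNat / (qPoch u.toNat * qPoch v.toNat * qPoch w.toNat) else 0

/-- `T n = n(n+1)/2`, the n-th triangular number (on `ℤ`, the division is exact). -/
def triZ (n : ℤ) : ℤ := n * (n + 1) / 2

/-!
By trinomial revision, the product of the first and the last Gaussian binomial in the `k`-th summand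
is `[L-i; j] [j; k]`, and `T_{i+j-k} + T_k = T_i + T_j + (i-k)(j-k)`. After pulling out
`q^{T_i+T_j} [L-i; j]`, what remains is `∑ q^{(i-k)(j-k)} [j; k] [L-j; i-k]`, which the
`q`-Vandermonde identity evaluates to `[L; i]`. Built from the `q`-Pascal rule, the Gaussian
binomials make sense at an element of any commutative semiring, and the argument needs no division.
-/

theorem choose_two_add_choose_two {i j k : ℕ} (hi : k ≤ i) (hj : k ≤ j) :
    (i + j - k + 1).choose 2 + (k + 1).choose 2 =
      (i + 1).choose 2 + (j + 1).choose 2 + (i - k) * (j - k) := by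
  obtain ⟨a, rfl⟩ := Nat.exists_eq_add_of_le hi
  obtain ⟨b, rfl⟩ := Nat.exists_eq_add_of_le hj
  rw [show k + a + (k + b) - k = k + a + b by omega, Nat.add_sub_cancel_left,
    Nat.add_sub_cancel_left]
  induction b with
  | zero => simp
  | succ b ih =>
    have h := ih (by omega)
    rw [← add_assoc, ← add_assoc k b 1, Nat.choose_succ_succ' (k + a + b + 1) 1,
      Nat.choose_succ_succ' (k + b + 1) 1]
    simp only [Nat.choose_one_right, Nat.reduceAdd]
    linarith

section GaussBinom

variable {R : Type*} [CommSemiring R] (q : R)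

/-- The Gaussian binomial coefficient `[n; k]` evaluated at `q`. The recursion by the `q`-Pascal
rule, rather than a quotient of `q`-factorials, makes it available when `q` is a root of unity. -/
def gaussBinom : ℕ → ℕ → R
  | _, 0 => 1
  | 0, _ + 1 => 0
  | n + 1, k + 1 => gaussBinom n k + q ^ (k + 1) * gaussBinom n (k + 1)

@[simp]
theorem gaussBinom_zero_right (n : ℕ) : gaussBinom q n 0 = 1 := by
  cases n <;> rfl

@[simp]
theorem gaussBinom_zero_succ (k : ℕ) : gaussBinom q 0 (k + 1) = 0 := rfl

theorem gaussBinom_succ_succ (n k : ℕ) :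
    gaussBinom q (n + 1) (k + 1) = gaussBinom q n k + q ^ (k + 1) * gaussBinom q n (k + 1) := rfl

theorem gaussBinom_eq_zero_of_lt {n k : ℕ} (h : n < k) : gaussBinom q n k = 0 := by
  induction n generalizing k with
  | zero => obtain ⟨k, rfl⟩ := Nat.exists_eq_succ_of_ne_zero h.ne'; rfl
  | succ n ih =>
    obtain ⟨k, rfl⟩ := Nat.exists_eq_succ_of_ne_zero (Nat.ne_zero_of_lt h)
    rw [gaussBinom_succ_succ, ih (by omega), ih (by omega), mul_zero, add_zero]

@[simp]
theorem gaussBinom_self (n : ℕ) : gaussBinom q n n = 1 := by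
  induction n with
  | zero => rfl
  | succ n ih =>
    rw [gaussBinom_succ_succ, ih, gaussBinom_eq_zero_of_lt q n.lt_succ_self, mul_zero, add_zero]

theorem gaussBinom_succ_succ' (n k : ℕ) :
    gaussBinom q (n + 1) (k + 1) = q ^ (n - k) * gaussBinom q n k + gaussBinom q n (k + 1) := by
  induction n generalizing k with
  | zero => cases k <;> simp [gaussBinom_succ_succ]
  | succ n ih =>
    cases k with
    | zero =>
      calc gaussBinom q (n + 2) 1
          = 1 + q * (q ^ n + gaussBinom q n 1) := by
            rw [gaussBinom_succ_succ, ih]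
            simp
        _ = q ^ (n + 1) + (1 + q * gaussBinom q n 1) := by ring
        _ = q ^ (n + 1 - 0) * gaussBinom q (n + 1) 0 + gaussBinom q (n + 1) 1 := by
            rw [gaussBinom_succ_succ q n]
            simp
    | succ k =>
      have hpow : q ^ (k + 2) * (q ^ (n - (k + 1)) * gaussBinom q n (k + 1)) =
          q ^ (n - k) * (q ^ (k + 1) * gaussBinom q n (k + 1)) := by
        rcases lt_or_ge n (k + 1) with h | h
        · simp [gaussBinom_eq_zero_of_lt q h]
        · rw [← mul_assoc, ← mul_assoc, ← pow_add, ← pow_add]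
          congr 2
          omega
      calc gaussBinom q (n + 2) (k + 2)
          = q ^ (n - k) * gaussBinom q n k + gaussBinom q n (k + 1) +
              q ^ (k + 2) * (q ^ (n - (k + 1)) * gaussBinom q n (k + 1) +
                gaussBinom q n (k + 2)) := by
            rw [gaussBinom_succ_succ, ih, ih]
        _ = q ^ (n - k) * (gaussBinom q n k + q ^ (k + 1) * gaussBinom q n (k + 1)) +
              (gaussBinom q n (k + 1) + q ^ (k + 2) * gaussBinom q n (k + 2)) := by
            rw [mul_add _ (_ * _), hpow]
            ring
        _ = q ^ (n + 1 - (k + 1)) * gaussBinom q (n + 1) (k + 1) +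
              gaussBinom q (n + 1) (k + 2) := by
            rw [gaussBinom_succ_succ, gaussBinom_succ_succ q n (k + 1), Nat.add_sub_add_right]

theorem gaussBinom_symm_add (a b : ℕ) : gaussBinom q (a + b) a = gaussBinom q (a + b) b := by
  induction a generalizing b with
  | zero => simp
  | succ a iha =>
    induction b with
    | zero => simp
    | succ b ihb =>
      calc gaussBinom q (a + 1 + b + 1) (a + 1)
          = gaussBinom q (a + 1 + b) a + q ^ (a + 1) * gaussBinom q (a + 1 + b) (a + 1) :=
            gaussBinom_succ_succ q _ _
        _ = gaussBinom q (a + 1 + b) (b + 1) + q ^ (a + 1) * gaussBinom q (a + 1 + b) b := by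
            rw [ihb, add_right_comm a 1 b]
            congr 1
            exact iha (b + 1)
        _ = gaussBinom q (a + 1 + b + 1) (b + 1) := by
            rw [gaussBinom_succ_succ', Nat.add_sub_cancel, add_comm]

/-- Both sides obey the three-term Pascal recursion of the `q`-trinomial coefficients. -/
theorem gaussBinom_add_mul_gaussBinom (s m d : ℕ) :
    gaussBinom q (s + m) (s + d) * gaussBinom q (s + d) s =
      gaussBinom q (s + m) s * gaussBinom q m d := by
  induction s generalizing m d with
  | zero => simp
  | succ s ihs =>
    induction m generalizing d with
    | zero => cases d <;> simp [gaussBinom_eq_zero_of_lt]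
    | succ m ihm =>
      cases d with
      | zero => simp
      | succ d =>
        have hs : gaussBinom q (s + m + 1) (s + d + 1) * gaussBinom q (s + d + 1) s =
            gaussBinom q (s + m + 1) s * gaussBinom q (m + 1) (d + 1) :=
          ihs (m + 1) (d + 1)
        have hm (e : ℕ) : gaussBinom q (s + m + 1) (s + e + 1) * gaussBinom q (s + e + 1) (s + 1) =
            gaussBinom q (s + m + 1) (s + 1) * gaussBinom q m e := by
          simpa only [add_right_comm s 1] using ihm e
        have hd := hm (d + 1)
        rw [← add_assoc s d 1] at hd
        rw [add_right_comm s 1, add_right_comm s 1, ← add_assoc s, ← add_assoc s]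
        calc gaussBinom q (s + m + 1 + 1) (s + d + 1 + 1) * gaussBinom q (s + d + 1 + 1) (s + 1)
            = gaussBinom q (s + m + 1) (s + d + 1) *
                  (gaussBinom q (s + d + 1) s + q ^ (s + 1) * gaussBinom q (s + d + 1) (s + 1)) +
                q ^ (s + d + 1 + 1) * (gaussBinom q (s + m + 1) (s + d + 1 + 1) *
                  gaussBinom q (s + d + 1 + 1) (s + 1)) := by
              rw [gaussBinom_succ_succ q (s + m + 1), add_mul, mul_assoc (q ^ _),
                ← gaussBinom_succ_succ q (s + d + 1)]
          _ = (gaussBinom q (s + m + 1) s + q ^ (s + 1) * gaussBinom q (s + m + 1) (s + 1)) *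
                (gaussBinom q m d + q ^ (d + 1) * gaussBinom q m (d + 1)) := by
              rw [mul_add, hs, mul_left_comm, hm, hd, gaussBinom_succ_succ q m]
              ring
          _ = gaussBinom q (s + m + 1 + 1) (s + 1) * gaussBinom q (m + 1) (d + 1) := by
              rw [gaussBinom_succ_succ q (s + m + 1) s, gaussBinom_succ_succ q m]

theorem gaussBinom_add_eq_sum_antidiagonal (m n k : ℕ) :
    gaussBinom q (m + n) k =
      ∑ p ∈ antidiagonal k,
        q ^ ((m - p.1) * p.2) * gaussBinom q m p.1 * gaussBinom q n p.2 := by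
  induction m generalizing k with
  | zero =>
    cases k <;> simp [Finset.Nat.sum_antidiagonal_succ]
  | succ m ih =>
    cases k with
    | zero => simp
    | succ k =>
      have hterm (a b : ℕ) (h : a + b = k) :
          q ^ ((m - a) * b) * gaussBinom q m a * gaussBinom q n b +
              q ^ (k + 1) * (q ^ ((m - (a + 1)) * b) * gaussBinom q m (a + 1) * gaussBinom q n b) =
            q ^ ((m - a) * b) * gaussBinom q (m + 1) (a + 1) * gaussBinom q n b := by
        rw [gaussBinom_succ_succ]
        rcases lt_or_ge m (a + 1) with hlt | hge
        · simp [gaussBinom_eq_zero_of_lt q hlt]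
        · obtain ⟨c, rfl⟩ := Nat.exists_eq_add_of_le hge
          rw [show a + 1 + c - a = c + 1 by omega, Nat.add_sub_cancel_left, ← h]
          ring
      rw [add_right_comm, gaussBinom_succ_succ, ih, ih, Finset.Nat.sum_antidiagonal_succ,
        Finset.Nat.sum_antidiagonal_succ, mul_add (_ ^ _) (_ * _ * _), mul_sum, add_left_comm,
        ← sum_add_distrib]
      congr 1
      · simp only [gaussBinom_zero_right, Nat.sub_zero]
        ring
      · refine sum_congr rfl fun p hp ↦ ?_
        rw [hterm p.1 p.2 (mem_antidiagonal.mp hp), Nat.add_sub_add_right]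

theorem gaussBinom_add_eq_sum_Icc (m n k : ℕ) :
    gaussBinom q (m + n) k =
      ∑ l ∈ Icc 0 (min k m),
        q ^ ((m - l) * (k - l)) * gaussBinom q m l * gaussBinom q n (k - l) := by
  rw [gaussBinom_add_eq_sum_antidiagonal, Finset.Nat.sum_antidiagonal_eq_sum_range_succ_mk,
    Nat.range_succ_eq_Icc_zero]
  refine (sum_subset (Icc_subset_Icc_right (min_le_left k m)) fun l hl hl' ↦ ?_).symm
  have hml : m < l := by
    simp only [mem_Icc, le_min_iff] at hl hl'
    omega
  simp [gaussBinom_eq_zero_of_lt q hml]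

theorem gaussBinom_sub_add_mul_gaussBinom_sub {n j k : ℕ} (hk : k ≤ j) (hj : j ≤ n) :
    gaussBinom q (n - j + k) k * gaussBinom q n (j - k) =
      gaussBinom q n j * gaussBinom q j k := by
  obtain ⟨b, rfl⟩ := Nat.exists_eq_add_of_le' hk
  obtain ⟨s, rfl⟩ := Nat.exists_eq_add_of_le hj
  rw [Nat.add_sub_cancel_left, Nat.add_sub_cancel, ← gaussBinom_symm_add q b k, add_assoc,
    add_comm s, gaussBinom_add_mul_gaussBinom, mul_comm]

theorem key_identity_equal_bounds_general {L i j : ℕ} (hL : i + j ≤ L) :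
    ∑ k ∈ Icc 0 (min i j),
      q ^ ((i + j - k + 1).choose 2 + (k + 1).choose 2) * gaussBinom q (L - i - j + k) k *
        gaussBinom q (L - j) (i - k) * gaussBinom q (L - i) (j - k) =
    q ^ ((i + 1).choose 2 + (j + 1).choose 2) *
      (gaussBinom q L i * gaussBinom q (L - i) j) := by
  have hvan := gaussBinom_add_eq_sum_Icc q j (L - j) i
  rw [Nat.add_sub_cancel' (by omega)] at hvan
  rw [hvan, sum_mul, mul_sum]
  refine sum_congr rfl fun k hk ↦ ?_
  obtain ⟨hi, hj⟩ := le_min_iff.mp (mem_Icc.mp hk).2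
  calc
    _ = q ^ ((i + j - k + 1).choose 2 + (k + 1).choose 2) * gaussBinom q (L - j) (i - k) *
          (gaussBinom q (L - i - j + k) k * gaussBinom q (L - i) (j - k)) := by
      ring
    _ = _ := by
      rw [choose_two_add_choose_two hi hj,
        gaussBinom_sub_add_mul_gaussBinom_sub q hj (by omega)]
      ring

end GaussBinom

theorem gaussBinom_mul_prod_mul_prod {R : Type*} [CommRing R] (q : R) (a b : ℕ) :
    gaussBinom q (a + b) a *
        ((∏ t ∈ range a, (1 - q ^ (t + 1))) * ∏ t ∈ range b, (1 - q ^ (t + 1))) =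
      ∏ t ∈ range (a + b), (1 - q ^ (t + 1)) := by
  induction a generalizing b with
  | zero => simp
  | succ a iha =>
    induction b with
    | zero => simp
    | succ b ihb =>
      have ha := iha (b + 1)
      rw [show a + (b + 1) = a + 1 + b by omega, prod_range_succ _ b] at ha
      rw [prod_range_succ _ a] at ihb
      rw [← add_assoc, gaussBinom_succ_succ, prod_range_succ _ a, prod_range_succ _ b,
        prod_range_succ _ (a + 1 + b)]
      linear_combination (1 - q ^ (a + 1)) * ha + q ^ (a + 1) * (1 - q ^ (b + 1)) * ihb

theorem sum_Icc_natCast {M : Type*} [AddCommMonoid M] (f : ℤ → M) (m n : ℕ) :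
    ∑ k ∈ Icc (m : ℤ) n, f k = ∑ k ∈ Icc m n, f k := by
  have hmap : Icc (m : ℤ) n = (Icc m n).map Nat.castEmbedding := by
    simp [← coe_inj, Nat.image_cast_int_Icc]
  rw [hmap, sum_map]
  rfl

theorem triZ_natCast (n : ℕ) : triZ n = ((n + 1).choose 2 : ℕ) := by
  rw [triZ, Nat.choose_two_right, Nat.add_sub_cancel, mul_comm]
  push_cast
  rfl

theorem qPoch_ne_zero (n : ℕ) : qPoch n ≠ 0 := by
  refine prod_ne_zero_iff.mpr fun t _ h ↦ ?_
  have hX : (RatFunc.X : RatFunc ℚ) ^ (t + 1) = 1 := (sub_eq_zero.mp h).symm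
  have hdeg := congrArg RatFunc.intDegree hX
  rw [← RatFunc.algebraMap_X, ← map_pow, RatFunc.intDegree_polynomial,
    Polynomial.natDegree_X_pow, RatFunc.intDegree_one] at hdeg
  omega

theorem gaussBinom_X_add (a b : ℕ) :
    gaussBinom (RatFunc.X : RatFunc ℚ) (a + b) a = qPoch (a + b) / (qPoch a * qPoch b) :=
  eq_div_of_mul_eq (mul_ne_zero (qPoch_ne_zero a) (qPoch_ne_zero b))
    (gaussBinom_mul_prod_mul_prod _ a b)

theorem qbin_natCast (n k : ℕ) : qbin n k = gaussBinom RatFunc.X n k := by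
  rcases lt_or_ge n k with h | h
  · rw [qbin, if_neg (by omega), gaussBinom_eq_zero_of_lt _ h]
  · obtain ⟨d, rfl⟩ := Nat.exists_eq_add_of_le h
    rw [gaussBinom_X_add, qbin, if_pos (by omega)]
    congr
    omega

theorem qtrinom_natCast_sub {L i j : ℕ} (hL : i + j ≤ L) :
    qtrinom i j (L - i - j) = gaussBinom RatFunc.X L i * gaussBinom RatFunc.X (L - i) j := by
  obtain ⟨s, rfl⟩ := Nat.exists_eq_add_of_le hL
  have hs : (((i + j + s : ℕ) : ℤ) - i - j) = s := by
    push_cast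
    ring
  have hjs := qPoch_ne_zero (j + s)
  rw [hs, add_assoc, Nat.add_sub_cancel_left, gaussBinom_X_add, gaussBinom_X_add, qtrinom,
    if_pos (by omega)]
  simp only [Int.toNat_natCast, ← Nat.cast_add, ← add_assoc]
  field_simp

theorem zpow_triZ_add_triZ {G : Type*} [DivInvMonoid G] (x : G) (m n : ℕ) :
    x ^ (triZ m + triZ n) = x ^ ((m + 1).choose 2 + (n + 1).choose 2) := by
  rw [triZ_natCast, triZ_natCast, ← Nat.cast_add, zpow_natCast]

theorem sum_zpow_mul_qbin_natCast {L i j : ℕ} (hL : i + j ≤ L) :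
    ∑ k ∈ Icc (0 : ℤ) (min i j),
      (RatFunc.X : RatFunc ℚ) ^ (triZ (i + j - k) + triZ k) *
        qbin (L - i - j + k) k * qbin (L - j) (i - k) * qbin (L - i) (j - k) =
    ∑ k ∈ Icc 0 (min i j),
      RatFunc.X ^ ((i + j - k + 1).choose 2 + (k + 1).choose 2) *
        gaussBinom RatFunc.X (L - i - j + k) k * gaussBinom RatFunc.X (L - j) (i - k) *
        gaussBinom RatFunc.X (L - i) (j - k) := by
  rw [← Nat.cast_zero, ← Nat.cast_min, sum_Icc_natCast]
  refine sum_congr rfl fun k hk ↦ ?_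
  obtain ⟨hi, hj⟩ := le_min_iff.mp (mem_Icc.mp hk).2
  have hT : (i + j - k : ℤ) = (i + j - k : ℕ) := by omega
  have hm : (L - i - j + k : ℤ) = (L - i - j + k : ℕ) := by omega
  rw [hT, hm, ← Nat.cast_sub hi, ← Nat.cast_sub hj, ← Nat.cast_sub (by omega : j ≤ L),
    ← Nat.cast_sub (by omega : i ≤ L), zpow_triZ_add_triZ]
  simp only [qbin_natCast]

/-- Identity (5.2), the case `L = M` of the double bounded key identity: for
`i, j ≥ 0` and `L ≥ i + j`,
`∑_{k=0}^{min(i,j)} q^{T_{i+j-k}+T_k} [L-i-j+k; k] [L-j; i-k] [L-i; j-k]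
  = q^{T_i+T_j} [L; i, j, L-i-j]`. -/
theorem key_identity_equal_bounds (L i j : ℤ)
    (hi : 0 ≤ i) (hj : 0 ≤ j) (hL : i + j ≤ L) :
    ∑ k ∈ Finset.Icc (0 : ℤ) (min i j),
      (RatFunc.X : RatFunc ℚ) ^ (triZ (i + j - k) + triZ k) *
        qbin (L - i - j + k) k * qbin (L - j) (i - k) * qbin (L - i) (j - k) =
    (RatFunc.X : RatFunc ℚ) ^ (triZ i + triZ j) * qtrinom i j (L - i - j) := by
  lift i to ℕ using hi
  lift j to ℕ using hj
  lift L to ℕ using by omega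
  have hL' : i + j ≤ L := by exact_mod_cast hL
  rw [sum_zpow_mul_qbin_natCast hL', key_identity_equal_bounds_general _ hL', zpow_triZ_add_triZ,
    qtrinom_natCast_sub hL']
end

section
/- For every integer L ≥ 2, the polynomial R_L(A, B; q) = \sum_{i, j ≥ 0, i+j ≤ L} A^i B^j q^{T_i + T_j} \binom{L}{i, j, L-i-j}_q satisfies the recurrence R_L(A, B; q) = (1 + A q^L + B q^L) R_{L-1}(A, B; q) + A B q^L (1 - q^{L-1}) R_{L-2}(A, B; q). -/
open Finset

/-- The field `ℚ(A, B, q)` of rational functions in three variables. -/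
abbrev K3 := FractionRing (MvPolynomial (Fin 3) ℚ)

/-- The variable `A`. -/
noncomputable def Av : K3 := algebraMap (MvPolynomial (Fin 3) ℚ) K3 (MvPolynomial.X 0)
/-- The variable `B`. -/
noncomputable def Bv : K3 := algebraMap (MvPolynomial (Fin 3) ℚ) K3 (MvPolynomial.X 1)
/-- The variable `q`. -/
noncomputable def qv : K3 := algebraMap (MvPolynomial (Fin 3) ℚ) K3 (MvPolynomial.X 2)

/-- `(x; x)_n = ∏_{t=0}^{n-1} (1 - x^{t+1})`. -/
noncomputable def pochK (x : K3) (n : ℕ) : K3 := ∏ t ∈ Finset.range n, (1 - x ^ (t + 1))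

/-- The q-multinomial coefficient of order 3 with base `x`,
`[u+v+w; u, v, w] = (x;x)_{u+v+w} / ((x;x)_u (x;x)_v (x;x)_w)`, set to `0` if any of
`u, v, w` is negative. -/
noncomputable def trinK (x : K3) (u v w : ℤ) : K3 :=
  if 0 ≤ u ∧ 0 ≤ v ∧ 0 ≤ w then
    pochK x (u + v + w).toNat / (pochK x u.toNat * pochK x v.toNat * pochK x w.toNat) else 0

/-- `T n = n(n+1)/2`, the n-th triangular number. -/
def tri (n : ℕ) : ℕ := n * (n + 1) / 2

/-- `R_L(A, B; q) = ∑_{i,j ≥ 0, i+j ≤ L} A^i B^j q^{T_i + T_j} [L; i, j, L-i-j]_q`. -/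
noncomputable def RL (L : ℕ) : K3 :=
  ∑ i ∈ Finset.range (L + 1), ∑ j ∈ Finset.range (L + 1 - i),
    Av ^ i * Bv ^ j * qv ^ (tri i + tri j) * trinK qv (i : ℤ) (j : ℤ) ((L : ℤ) - i - j)

/-!
The trinomial sums have the generating function
`∑ R_n zⁿ / (q)_n = (-Aqz)_∞ (-Bqz)_∞ / (z)_∞` by Euler's two expansions. Replacing `z` by `qz`
removes the first factor of each infinite product, so the generating function `F` satisfies
`(1 - z) F(z) = (1 + Aqz) (1 + Bqz) F(qz)`, and the recurrence compares coefficients of `zᴸ`.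
-/

theorem tri_succ (n : ℕ) : tri (n + 1) = tri n + (n + 1) := by
  simpa only [tri, mul_comm, Nat.add_sub_cancel] using Nat.triangle_succ (n + 1)

theorem one_sub_pow_succ_ne_zero {R : Type*} [Ring R] {q : R} (hq : ¬IsOfFinOrder q) (n : ℕ) :
    1 - q ^ (n + 1) ≠ 0 :=
  fun h ↦ hq (isOfFinOrder_iff_pow_eq_one.mpr ⟨n + 1, n.succ_pos, (sub_eq_zero.mp h).symm⟩)

/-- The `q`-Pochhammer symbol `(q; q)_n` over an arbitrary commutative ring. -/
def qPochhammer {R : Type*} [CommRing R] (q : R) (n : ℕ) : R := ∏ t ∈ range n, (1 - q ^ (t + 1))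

theorem qPochhammer_succ {R : Type*} [CommRing R] (q : R) (n : ℕ) :
    qPochhammer q (n + 1) = qPochhammer q n * (1 - q ^ (n + 1)) :=
  prod_range_succ _ _

theorem qPochhammer_ne_zero {R : Type*} [CommRing R] [IsDomain R] {q : R} (hq : ¬IsOfFinOrder q)
    (n : ℕ) : qPochhammer q n ≠ 0 :=
  prod_ne_zero_iff.mpr fun t _ ↦ one_sub_pow_succ_ne_zero hq t

section PowerSeries

open PowerSeries

theorem coeff_recurrence_of_rescale {R : Type*} [CommRing R] {q α β : R} {F : R⟦X⟧}
    (hF : (1 - X) * F = (1 + C α * X) * ((1 + C β * X) * rescale q F)) (n : ℕ) :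
    (1 - q ^ (n + 2)) * coeff (n + 2) F =
      (1 + (α + β) * q ^ (n + 1)) * coeff (n + 1) F + α * β * q ^ n * coeff n F := by
  have h := congrArg (coeff (n + 2)) hF
  simp only [sub_mul, add_mul, one_mul, mul_assoc, map_sub, map_add, coeff_C_mul,
    coeff_succ_X_mul, coeff_rescale] at h
  linear_combination h

variable {K : Type*} [Field K]

/-- The `q`-multinomial coefficient `[u+v+w; u, v, w]_q` over an arbitrary field, evaluated at `q`;
it has the intended value as long as `q` is not a root of unity, so that no denominator vanishes. -/
def qTrinomial (q : K) (u v w : ℕ) : K :=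
  qPochhammer q (u + v + w) / (qPochhammer q u * qPochhammer q v * qPochhammer q w)

/-- The value of `R_L` at elements `a`, `b`, `q` of an arbitrary field. The sum runs over the
decompositions `L = i + (j + k)`, written as pairs `p = (i, j + k)` and `r = (j, k)`. -/
def qTrinomialSum (a b q : K) (L : ℕ) : K :=
  ∑ p ∈ antidiagonal L, ∑ r ∈ antidiagonal p.2,
    a ^ p.1 * b ^ r.1 * q ^ (tri p.1 + tri r.1) * qTrinomial q p.1 r.1 r.2

/-- Euler's expansion `∑ zⁿ / (q)_n` of `1 / (z; q)_∞`, as a formal power series in `z`. -/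
def eulerSeries (q : K) : K⟦X⟧ := mk fun n ↦ (qPochhammer q n)⁻¹

/-- Euler's expansion `∑ q^{T_n} (a z)ⁿ / (q)_n` of `(-aqz; q)_∞`, as a formal power series
in `z`. -/
def eulerProdSeries (a q : K) : K⟦X⟧ := mk fun n ↦ a ^ n * q ^ tri n / qPochhammer q n

/-- The generating function `∑ R_n zⁿ / (q)_n` of the sums `R_n = qTrinomialSum a b q n`. -/
def qTrinomialSeries (a b q : K) : K⟦X⟧ := mk fun n ↦ qTrinomialSum a b q n / qPochhammer q n

variable {q : K}

theorem one_sub_X_mul_eulerSeries (hq : ¬IsOfFinOrder q) :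
    (1 - X) * eulerSeries q = rescale q (eulerSeries q) := by
  ext n
  cases n with
  | zero => simp [eulerSeries, rescale_mk]
  | succ n =>
    have hn := qPochhammer_ne_zero hq n
    have hsucc := one_sub_pow_succ_ne_zero hq n
    simp only [sub_mul, one_mul, map_sub, coeff_succ_X_mul, coeff_rescale, eulerSeries, coeff_mk,
      qPochhammer_succ]
    field_simp
    ring

theorem eulerProdSeries_eq_mul_rescale (hq : ¬IsOfFinOrder q) (a : K) :
    eulerProdSeries a q = (1 + C (a * q) * X) * rescale q (eulerProdSeries a q) := by
  ext n
  cases n with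
  | zero => simp [eulerProdSeries, rescale_mk]
  | succ n =>
    have hn := qPochhammer_ne_zero hq n
    have hsucc := one_sub_pow_succ_ne_zero hq n
    simp only [add_mul, one_mul, mul_assoc, map_add, coeff_C_mul, coeff_succ_X_mul, coeff_rescale,
      eulerProdSeries, coeff_mk, qPochhammer_succ, tri_succ]
    field_simp
    ring

theorem qTrinomialSeries_eq_mul (hq : ¬IsOfFinOrder q) (a b : K) :
    qTrinomialSeries a b q = eulerProdSeries a q * (eulerProdSeries b q * eulerSeries q) := by
  ext L
  simp only [qTrinomialSeries, eulerProdSeries, eulerSeries, coeff_mul, coeff_mk, qTrinomialSum,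
    mul_sum, sum_div]
  refine sum_congr rfl fun p hp ↦ sum_congr rfl fun r hr ↦ ?_
  have hL : p.1 + r.1 + r.2 = L := by
    rw [add_assoc, mem_antidiagonal.mp hr, mem_antidiagonal.mp hp]
  have hne := qPochhammer_ne_zero hq L
  rw [qTrinomial, hL]
  field_simp
  ring

theorem one_sub_X_mul_qTrinomialSeries (hq : ¬IsOfFinOrder q) (a b : K) :
    (1 - X) * qTrinomialSeries a b q =
      (1 + C (a * q) * X) * ((1 + C (b * q) * X) * rescale q (qTrinomialSeries a b q)) := by
  rw [qTrinomialSeries_eq_mul hq]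
  calc (1 - X) * (eulerProdSeries a q * (eulerProdSeries b q * eulerSeries q))
    _ = eulerProdSeries a q * (eulerProdSeries b q * ((1 - X) * eulerSeries q)) := by ring
    _ = (1 + C (a * q) * X) * rescale q (eulerProdSeries a q) *
          ((1 + C (b * q) * X) * rescale q (eulerProdSeries b q) *
            rescale q (eulerSeries q)) := by
      rw [one_sub_X_mul_eulerSeries hq, ← eulerProdSeries_eq_mul_rescale hq,
        ← eulerProdSeries_eq_mul_rescale hq]
    _ = (1 + C (a * q) * X) * ((1 + C (b * q) * X) *
          rescale q (eulerProdSeries a q * (eulerProdSeries b q * eulerSeries q))) := by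
      simp only [map_mul]
      ring

theorem RL_recurrence_general (hq : ¬IsOfFinOrder q) (a b : K) {L : ℕ} (hL : 2 ≤ L) :
    qTrinomialSum a b q L =
      (1 + a * q ^ L + b * q ^ L) * qTrinomialSum a b q (L - 1) +
        a * b * q ^ L * (1 - q ^ (L - 1)) * qTrinomialSum a b q (L - 2) := by
  obtain ⟨n, rfl⟩ := Nat.exists_eq_add_of_le' hL
  have hrec := coeff_recurrence_of_rescale (one_sub_X_mul_qTrinomialSeries hq a b) n
  simp only [qTrinomialSeries, coeff_mk, qPochhammer_succ] at hrec
  have hn := qPochhammer_ne_zero hq n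
  have hn₁ := one_sub_pow_succ_ne_zero hq n
  have hn₂ := one_sub_pow_succ_ne_zero hq (n + 1)
  field_simp at hrec
  simp only [Nat.add_sub_cancel, Nat.add_succ_sub_one]
  linear_combination hrec

end PowerSeries

theorem not_isOfFinOrder_qv : ¬IsOfFinOrder qv := by
  rw [isOfFinOrder_iff_pow_eq_one]
  rintro ⟨n, hn, hqn⟩
  have hX : (MvPolynomial.X 2 : MvPolynomial (Fin 3) ℚ) ^ n = 1 :=
    IsFractionRing.injective (MvPolynomial (Fin 3) ℚ) K3 (by simpa [qv] using hqn)
  simpa [hn.ne'] using congrArg (MvPolynomial.eval 0) hX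

theorem trinK_natCast (x : K3) (u v w : ℕ) : trinK x u v w = qTrinomial x u v w := by
  rw [trinK, if_pos ⟨u.cast_nonneg, v.cast_nonneg, w.cast_nonneg⟩]
  norm_cast

theorem RL_eq_qTrinomialSum (L : ℕ) : RL L = qTrinomialSum Av Bv qv L := by
  simp only [RL, qTrinomialSum, Nat.sum_antidiagonal_eq_sum_range_succ_mk]
  refine sum_congr rfl fun i hi ↦ ?_
  have hiL : i ≤ L := mem_range_succ_iff.mp hi
  rw [Nat.succ_eq_add_one, ← Nat.sub_add_comm hiL]
  refine sum_congr rfl fun j hj ↦ ?_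
  have hjL : j ≤ L - i := by
    have hj := mem_range.mp hj
    lia
  rw [← Nat.cast_sub hiL, ← Nat.cast_sub hjL, trinK_natCast]

/-- The recurrence (5.6): for `L ≥ 2`,
`R_L(A,B;q) = (1 + Aq^L + Bq^L) R_{L-1}(A,B;q) + ABq^L (1 - q^{L-1}) R_{L-2}(A,B;q)`. -/
theorem RL_recurrence (L : ℕ) (hL : 2 ≤ L) :
    RL L = (1 + Av * qv ^ L + Bv * qv ^ L) * RL (L - 1) +
      Av * Bv * qv ^ L * (1 - qv ^ (L - 1)) * RL (L - 2) := by
  simpa only [RL_eq_qTrinomialSum] using RL_recurrence_general not_isOfFinOrder_qv Av Bv hL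
end
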